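/- Let β>0 and let f ∈ BV((0,1)). For every integer n≥2, every minimizer u_n ∈ PC_{1/n}(0,1) of DPMF_n(β,f,(0,1),·) satisfies |Du_n|((0,1)) ≤ |Df|((0,1)), i.e. the total variation of any minimizer does not exceed the total variation of the forcing term. -/

import Mathlib

/-!
Let `δ = 1/n`, let `u` be a minimizer, and let `s` be the sign of the increment of `u` from each
cell to the next one, extended by zero outside the `n - 1` interior increments. The argument tests
minimality in the single direction `w(x) = s(x) - s(x - δ)`.

Each increment of `w` is a second difference of `s`. Where `u` has a nonzero increment, `s = ±1` is
extremal, so the increment of `w` has the opposite sign (or vanishes). Hence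
`log (1 + (Du + t Dw)²) ≤ log (1 + (Du)²) + t² (Dw)²` for `t ≥ 0`: along `w` the logarithmic part of
the functional grows at most quadratically. The first order part of the fidelity term must then be
nonnegative, that is `0 ≤ ∫ w (u - f)` (`integral_testDir_nonneg`).

Conversely, folding `(0, 1)` onto its first cell and summing by parts on each translate `x + δℤ` of
the grid gives `∑ w (u - f) = -∑ s Δ(u - f) = -∑ |Δu| + ∑ s Δf ≤ -|Du| + |Df|`. Integration over
`x ∈ (0, δ)` yields `∫ w (u - f) ≤ δ (|Df| - |Du|)` (`integral_testDir_le`). The two inequalities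
together are the claim.
-/

open MeasureTheory Filter Set

namespace PeronaMalik

/-- `a_{δ,*} = δ⌊a/δ⌋`, the lower `δ`-approximation of `a`. -/
noncomputable def lowGrid (δ a : ℝ) : ℝ := δ * (⌊a / δ⌋ : ℤ)

/-- `b_δ^* = δ⌈b/δ⌉`, the upper `δ`-approximation of `b`. -/
noncomputable def highGrid (δ b : ℝ) : ℝ := δ * (⌈b / δ⌉ : ℤ)

/-- `u` is piecewise constant at scale `δ`: constant on every interval `[zδ, (z+1)δ)`. -/
def IsPC (δ : ℝ) (u : ℝ → ℝ) : Prop :=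
  ∀ z : ℤ, ∀ x ∈ Set.Ico ((z : ℝ) * δ) (((z : ℝ) + 1) * δ), u x = u ((z : ℝ) * δ)

/-- Discrete derivative `D^δ u (x) = (u(x+δ) - u(x))/δ`. -/
noncomputable def Dd (δ : ℝ) (u : ℝ → ℝ) (x : ℝ) : ℝ := (u (x + δ) - u x) / δ

/-- The discrete Perona–Malik functional with fidelity term on `(a,b)`. -/
noncomputable def DPMF (n : ℕ) (β : ℝ) (f : ℝ → ℝ) (a b : ℝ) (u : ℝ → ℝ) : ℝ :=
  (∫ x in lowGrid (1 / (n : ℝ)) a..(highGrid (1 / (n : ℝ)) b - 1 / (n : ℝ)),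
      Real.log (1 + (Dd (1 / (n : ℝ)) u x) ^ 2)) +
    β * ∫ x in a..b, (u x - f x) ^ 2

/-- `u` is a minimizer of `DPMF n β f (0,1)` over `PC_{1/n}(0,1)`. -/
def IsMinimizer (n : ℕ) (β : ℝ) (f : ℝ → ℝ) (u : ℝ → ℝ) : Prop :=
  IsPC (1 / (n : ℝ)) u ∧
    ∀ v : ℝ → ℝ, IsPC (1 / (n : ℝ)) v → DPMF n β f 0 1 u ≤ DPMF n β f 0 1 v

/-- `m(n,β,f)`, the minimum value of the discrete Perona–Malik functional. -/
noncomputable def mval (n : ℕ) (β : ℝ) (f : ℝ → ℝ) : ℝ :=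
  sInf ((fun u => DPMF n β f 0 1 u) '' {u | IsPC (1 / (n : ℝ)) u})

/-- `ω(n) = (log n / n)^{1/3}`. -/
noncomputable def omg (n : ℕ) : ℝ := (Real.log n / n) ^ ((1 : ℝ) / 3)

/-- `δ(n) = 1/(n ω(n))`. -/
noncomputable def dlt (n : ℕ) : ℝ := 1 / ((n : ℝ) * omg n)

/-- The rescaled discrete Perona–Malik functional. -/
noncomputable def RDPM (n : ℕ) (a b : ℝ) (u : ℝ → ℝ) : ℝ :=
  (1 / omg n ^ 2) *
    ∫ x in lowGrid (dlt n) a..(highGrid (dlt n) b - dlt n),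
      Real.log (1 + (Dd (dlt n) u x) ^ 2)

/-- The rescaled discrete Perona–Malik functional with fidelity term. -/
noncomputable def RDPMF (n : ℕ) (β : ℝ) (f : ℝ → ℝ) (a b : ℝ) (u : ℝ → ℝ) : ℝ :=
  RDPM n a b u + β * ∫ x in Set.Ioo a b, (u x - f x) ^ 2

/-- `u` is a step function with finitely many jumps on `(a,b)`. -/
def IsStep (a b : ℝ) (u : ℝ → ℝ) : Prop :=
  ∃ (s : Finset ℝ) (c : ℝ) (J : ℝ → ℝ),
    (∀ p ∈ s, p ∈ Set.Ioo a b ∧ J p ≠ 0) ∧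
    ∀ x ∈ Set.Ioo a b, u x = c + ∑ p ∈ s, (if p ≤ x then J p else 0)

/-- The set of jump (discontinuity) points of `u` inside `(a,b)`. -/
def jumpSet (a b : ℝ) (u : ℝ → ℝ) : Set ℝ :=
  {x ∈ Set.Ioo a b | ¬ ContinuousAt u x}

/-- The limit functional `JF(α,β,f,(a,b),u) = α·#jumps + β∫(u-f)²`. -/
noncomputable def JF (α β : ℝ) (f : ℝ → ℝ) (a b : ℝ) (u : ℝ → ℝ) : ℝ :=
  α * ((jumpSet a b u).ncard : ℝ) + β * ∫ x in Set.Ioo a b, (u x - f x) ^ 2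

/-- Strict convergence in `BV((a,b))`: `L¹` convergence plus convergence of
total variations. -/
def StrictBV (useq : ℕ → ℝ → ℝ) (u : ℝ → ℝ) (a b : ℝ) : Prop :=
  Tendsto (fun k => ∫ x in Set.Ioo a b, |useq k x - u x|) atTop (nhds 0) ∧
  Tendsto (fun k => eVariationOn (useq k) (Set.Ioo a b)) atTop
    (nhds (eVariationOn u (Set.Ioo a b)))

/-- Locally strict convergence in `BV_loc(ℝ)`: strict convergence on every bounded
interval whose endpoints are not jump points of the limit. -/
def LocStrictBV (useq : ℕ → ℝ → ℝ) (u : ℝ → ℝ) : Prop :=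
  ∀ a b : ℝ, a < b → ContinuousAt u a → ContinuousAt u b → StrictBV useq u a b

/-- `S(x) = 2⌊(x+1)/2⌋`. -/
noncomputable def stairS (x : ℝ) : ℝ := 2 * (⌊(x + 1) / 2⌋ : ℤ)

/-- The canonical `(H,V)`-staircase `S_{H,V}(x) = V·S(x/H)`. -/
noncomputable def canStair (H V : ℝ) (x : ℝ) : ℝ := V * stairS (x / H)

/-- Oblique translations of the canonical `(H,V)`-staircase. -/
def Obl (H V : ℝ) (v : ℝ → ℝ) : Prop :=
  ∃ τ ∈ Set.Icc (-1 : ℝ) 1, ∀ x, v x = canStair H V (x - H * τ) + V * τ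

/-- Graph translations of horizontal type of the canonical `(H,V)`-staircase. -/
def Orz (H V : ℝ) (v : ℝ → ℝ) : Prop :=
  ∃ τ ∈ Set.Icc (-1 : ℝ) 1, ∀ x, v x = canStair H V (x - H * τ)

/-- `μ_n(β,L,M)`: minimum of the rescaled functional with affine forcing term. -/
noncomputable def muDisc (n : ℕ) (β L M : ℝ) : ℝ :=
  sInf ((fun u => RDPMF n β (fun x => M * x) 0 L u) '' {u | IsPC (dlt n) u})

/-- `μ*_n(β,L,M)`: same as `μ_n` but with boundary conditions `u(0)=0`, `u(L^*)=ML`. -/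
noncomputable def muDiscStar (n : ℕ) (β L M : ℝ) : ℝ :=
  sInf ((fun u => RDPMF n β (fun x => M * x) 0 L u) ''
    {u | IsPC (dlt n) u ∧ u 0 = 0 ∧ u (highGrid (dlt n) L - dlt n) = M * L})

/-- `μ(α,β,L,M)`: minimum of the limit functional with affine forcing term. -/
noncomputable def muLim (α β L M : ℝ) : ℝ :=
  sInf ((fun u => JF α β (fun x => M * x) 0 L u) '' {u | IsStep 0 L u})

/-- `μ*(α,β,L,M)`: same as `μ` but with boundary values `u(0⁺)=0`, `u(L⁻)=ML`. -/
noncomputable def muLimStar (α β L M : ℝ) : ℝ :=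
  sInf ((fun u => JF α β (fun x => M * x) 0 L u) ''
    {u | IsStep 0 L u ∧ Tendsto u (nhdsWithin 0 (Set.Ioi 0)) (nhds 0) ∧
         Tendsto u (nhdsWithin L (Set.Iio L)) (nhds (M * L))})

/-- `u` and `v` have the same boundary values `u(a⁺)=v(a⁺)`, `u(b⁻)=v(b⁻)`. -/
def SameBdry (a b : ℝ) (u v : ℝ → ℝ) : Prop :=
  (∀ c : ℝ, Tendsto v (nhdsWithin a (Set.Ioi a)) (nhds c) →
     Tendsto u (nhdsWithin a (Set.Ioi a)) (nhds c)) ∧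
  (∀ c : ℝ, Tendsto v (nhdsWithin b (Set.Iio b)) (nhds c) →
     Tendsto u (nhdsWithin b (Set.Iio b)) (nhds c))

/-- `v` is a local minimizer for `JF(α,β,f,(a,b),·)` among step functions with the
same boundary values. -/
def IsLocalMinJF (α β : ℝ) (f : ℝ → ℝ) (a b : ℝ) (v : ℝ → ℝ) : Prop :=
  IsStep a b v ∧
  ∀ u : ℝ → ℝ, IsStep a b u → SameBdry a b u v → JF α β f a b v ≤ JF α β f a b u

/-- `v` is an entire local minimizer for `JF(α,β,f,·,·)`. -/
def IsEntireLocalMinJF (α β : ℝ) (f : ℝ → ℝ) (v : ℝ → ℝ) : Prop :=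
  ∀ a b : ℝ, a < b → IsLocalMinJF α β f a b v

/-- `v` is a local minimizer for `RDPMF_n(β,f,(a,b),·)` among piecewise constant
functions with the same boundary values. -/
def IsLocalMinRDPMF (n : ℕ) (β : ℝ) (f : ℝ → ℝ) (a b : ℝ) (v : ℝ → ℝ) : Prop :=
  IsPC (dlt n) v ∧
  ∀ u : ℝ → ℝ, IsPC (dlt n) u →
    u (lowGrid (dlt n) a) = v (lowGrid (dlt n) a) →
    u (highGrid (dlt n) b - dlt n) = v (highGrid (dlt n) b - dlt n) →
    RDPMF n β f a b v ≤ RDPMF n β f a b u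

/-! ### Grid functions -/

/-- The piecewise constant function with value `U k` on `[kδ, (k+1)δ)`. -/
noncomputable def stepFn (δ : ℝ) (U : ℤ → ℝ) (x : ℝ) : ℝ := U ⌊x / δ⌋

lemma floor_div_eq {δ : ℝ} (hδ : 0 < δ) {z : ℤ} {x : ℝ}
    (hx : x ∈ Set.Ico ((z : ℝ) * δ) (((z : ℝ) + 1) * δ)) : ⌊x / δ⌋ = z := by
  rw [Int.floor_eq_iff, le_div_iff₀ hδ, div_lt_iff₀ hδ]
  exact hx

lemma isPC_stepFn {δ : ℝ} (hδ : 0 < δ) (U : ℤ → ℝ) : IsPC δ (stepFn δ U) := by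
  intro z x hx
  have h : ⌊(z : ℝ) * δ / δ⌋ = z := by rw [mul_div_cancel_right₀ _ hδ.ne', Int.floor_intCast]
  simp only [stepFn, floor_div_eq hδ hx, h]

lemma IsPC.eq_stepFn {δ : ℝ} (hδ : 0 < δ) {u : ℝ → ℝ} (hu : IsPC δ u) :
    u = stepFn δ (fun k => u (k * δ)) := by
  funext x
  refine hu ⌊x / δ⌋ x ⟨?_, ?_⟩
  · rw [← le_div_iff₀ hδ]; exact Int.floor_le _
  · rw [← div_lt_iff₀ hδ]; exact Int.lt_floor_add_one _

lemma Dd_stepFn {δ : ℝ} (hδ : 0 < δ) (U : ℤ → ℝ) (x : ℝ) :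
    Dd δ (stepFn δ U) x = (U (⌊x / δ⌋ + 1) - U ⌊x / δ⌋) / δ := by
  have h : ⌊(x + δ) / δ⌋ = ⌊x / δ⌋ + 1 := by
    rw [add_div, div_self hδ.ne', Int.floor_add_one]
  simp only [Dd, stepFn, h]

lemma memLp_stepFn {δ : ℝ} (hδ : 0 < δ) (U : ℤ → ℝ) (a b : ℝ) :
    MemLp (stepFn δ U) 2 (volume.restrict (Ioo a b)) := by
  have hm : Measurable (stepFn δ U) :=
    (measurable_from_top (f := U)).comp (Int.measurable_floor.comp (measurable_id.div_const δ))
  -- Only finitely many cells meet `(a, b)`.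
  refine MemLp.of_bound hm.aestronglyMeasurable
    (∑ k ∈ Finset.Icc ⌊a / δ⌋ ⌊b / δ⌋, |U k|) ?_
  refine (ae_restrict_iff' measurableSet_Ioo).2 (Eventually.of_forall fun x hx => ?_)
  have hk : ⌊x / δ⌋ ∈ Finset.Icc ⌊a / δ⌋ ⌊b / δ⌋ := by
    rw [Finset.mem_Icc]
    exact ⟨Int.floor_mono (div_le_div_of_nonneg_right hx.1.le hδ.le),
      Int.floor_mono (div_le_div_of_nonneg_right hx.2.le hδ.le)⟩
  exact Finset.single_le_sum (f := fun k => |U k|) (fun k _ => abs_nonneg (U k)) hk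

lemma intervalIntegrable_stepFn {δ : ℝ} (hδ : 0 < δ) (U : ℤ → ℝ) {a b : ℝ} (hab : a ≤ b) :
    IntervalIntegrable (stepFn δ U) volume a b := by
  rw [intervalIntegrable_iff_integrableOn_Ioo_of_le hab]
  exact (memLp_stepFn hδ U a b).integrable (by norm_num)

/-! ### Functions of bounded variation -/

lemma memLp_of_boundedVariation {f : ℝ → ℝ} {a b : ℝ} (hab : a < b)
    (hf : eVariationOn f (Ioo a b) ≠ ⊤) : MemLp f 2 (volume.restrict (Ioo a b)) := by
  have hbv : BoundedVariationOn f (Ioo a b) := hf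
  obtain ⟨p, q, hp, hq, rfl⟩ := hbv.locallyBoundedVariationOn.exists_monotoneOn_sub_monotoneOn
  have hm : AEMeasurable (p - q) (volume.restrict (Ioo a b)) :=
    (aemeasurable_restrict_of_monotoneOn measurableSet_Ioo hp).sub
      (aemeasurable_restrict_of_monotoneOn measurableSet_Ioo hq)
  have hc : (a + b) / 2 ∈ Ioo a b := ⟨by linarith, by linarith⟩
  refine MemLp.of_bound hm.aestronglyMeasurable
    ((eVariationOn (p - q) (Ioo a b)).toReal + ‖(p - q) ((a + b) / 2)‖) ?_
  refine (ae_restrict_iff' measurableSet_Ioo).2 (Eventually.of_forall fun x hx => ?_)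
  have h1 := hbv.dist_le hx hc
  rw [dist_eq_norm] at h1
  have h2 := norm_sub_norm_le ((p - q) x) ((p - q) ((a + b) / 2))
  linarith

lemma eVariationOn_stepFn_le {m : ℕ} (U : ℤ → ℝ) :
    eVariationOn (stepFn (1 / ((m + 1 : ℕ) : ℝ)) U) (Ioo 0 1) ≤
      ENNReal.ofReal (∑ i ∈ Finset.range m, |U (i + 1) - U i|) := by
  set δ : ℝ := 1 / ((m + 1 : ℕ) : ℝ) with hδdef
  have hδ : 0 < δ := by positivity
  have h1 : EqOn (stepFn δ U) ((fun k : ℕ => U k) ∘ fun x => ⌊x / δ⌋₊) (Ioo 0 1) := by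
    intro x hx
    simp only [stepFn, Function.comp]
    rw [Int.natCast_floor_eq_floor (div_nonneg hx.1.le hδ.le)]
  rw [eVariationOn.congr h1]
  calc _ ≤ eVariationOn (fun k : ℕ => U k) (id '' Iic m) := by
        apply eVariationOn.comp_le_of_monotoneOn
        · intro x _ y _ hxy
          exact Nat.floor_mono (div_le_div_of_nonneg_right hxy hδ.le)
        · intro x hx
          simp only [image_id, mem_Iic]
          refine Nat.lt_succ_iff.1 ((Nat.floor_lt (div_nonneg hx.1.le hδ.le)).2 ?_)
          rw [div_lt_iff₀ hδ, hδdef, Nat.succ_eq_add_one, mul_one_div_cancel (by positivity)]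
          exact hx.2
    _ = ∑ i ∈ Finset.range m, ENNReal.ofReal |U (i + 1) - U i| := by
        rw [eVariationOn.image_range_of_monotone _ monotone_id]
        refine Finset.sum_congr rfl fun i _ => ?_
        rw [edist_comm, edist_dist, Real.dist_eq]
        simp
    _ = _ := (ENNReal.ofReal_sum_of_nonneg fun i _ => abs_nonneg _).symm

/-- Along the points `x + iδ`, all in `(0, 1)`, the increments of `f` weighted by signs sum to at
most the variation of `f`. -/
lemma weighted_increments_le {f : ℝ → ℝ} (hf : eVariationOn f (Ioo 0 1) ≠ ⊤) {m : ℕ} {δ x : ℝ}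
    (hδ : 0 < δ) (hmδ : (m + 1) * δ = 1) (hx : x ∈ Ioo 0 δ) (S : ℤ → ℝ) (hS : ∀ k, |S k| ≤ 1) :
    ∑ i ∈ Finset.range m, S i * (f (x + (i + 1 : ℕ) * δ) - f (x + (i : ℕ) * δ)) ≤
      (eVariationOn f (Ioo 0 1)).toReal := by
  have hsum : ∑ i ∈ Finset.range m, edist (f (x + (i + 1 : ℕ) * δ)) (f (x + (i : ℕ) * δ)) ≤
      eVariationOn f (Ioo 0 1) := by
    refine eVariationOn.sum_le_of_monotoneOn_Iic (u := fun i : ℕ => x + (i : ℝ) * δ) ?_ ?_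
    · intro i _ j _ hij
      have : (i : ℝ) ≤ j := by exact_mod_cast hij
      dsimp only
      gcongr
    · intro i hi
      have h1 : (i : ℝ) ≤ m := by exact_mod_cast hi
      have h2 : (i : ℝ) * δ ≤ m * δ := by gcongr
      have h3 : 0 ≤ (i : ℝ) * δ := by positivity
      exact ⟨by linarith [hx.1], by linarith [hx.2]⟩
  have hreal : ∑ i ∈ Finset.range m, |f (x + (i + 1 : ℕ) * δ) - f (x + (i : ℕ) * δ)| ≤
      (eVariationOn f (Ioo 0 1)).toReal := by
    rw [← ENNReal.ofReal_le_iff_le_toReal hf, ENNReal.ofReal_sum_of_nonneg fun i _ => abs_nonneg _]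
    simpa only [edist_dist, Real.dist_eq] using hsum
  refine (Finset.sum_le_sum fun i _ => ?_).trans hreal
  refine (le_abs_self _).trans ?_
  rw [abs_mul]
  exact mul_le_of_le_one_left (abs_nonneg _) (hS i)

/-! ### The test direction -/

/-- The sign of the `k`-th increment of `U` for `0 ≤ k < m`, and `0` otherwise. -/
noncomputable def incSign (m : ℕ) (U : ℤ → ℝ) (k : ℤ) : ℝ :=
  if 0 ≤ k ∧ k < m then (SignType.sign (U (k + 1) - U k) : ℝ) else 0

/-- The backward difference of `incSign`. It is the negative of a subgradient at `U` of the discrete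
total variation. -/
noncomputable def testDir (m : ℕ) (U : ℤ → ℝ) (k : ℤ) : ℝ :=
  incSign m U k - incSign m U (k - 1)

lemma abs_incSign_le (m : ℕ) (U : ℤ → ℝ) (k : ℤ) : |incSign m U k| ≤ 1 := by
  unfold incSign
  split_ifs
  · rcases lt_trichotomy (U (k + 1) - U k) 0 with h | h | h <;> simp [h]
  · simp

lemma incSign_mul_self {m : ℕ} (U : ℤ → ℝ) {k : ℤ} (h0 : 0 ≤ k) (hk : k < m) :
    incSign m U k * (U (k + 1) - U k) = |U (k + 1) - U k| := by
  rw [incSign, if_pos ⟨h0, hk⟩, sign_mul_self]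

/-- Moving along `testDir` shrinks each nonzero increment to first order, because `incSign`
attains its extreme values `±1` there. -/
lemma inc_mul_testDir_nonpos {m : ℕ} (U : ℤ → ℝ) {k : ℤ} (h0 : 0 ≤ k) (hk : k < m) :
    (U (k + 1) - U k) * (testDir m U (k + 1) - testDir m U k) ≤ 0 := by
  have h1 := abs_le.1 (abs_incSign_le m U (k + 1))
  have h2 := abs_le.1 (abs_incSign_le m U (k - 1))
  have h3 : incSign m U k = SignType.sign (U (k + 1) - U k) := if_pos ⟨h0, hk⟩
  simp only [testDir, add_sub_cancel_right, h3]
  rcases lt_trichotomy (U (k + 1) - U k) 0 with h | h | h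
  · rw [sign_neg h]
    rw [SignType.coe_neg, SignType.coe_one]
    exact mul_nonpos_of_nonpos_of_nonneg h.le (by linarith)
  · rw [h]; simp
  · rw [sign_pos h]
    rw [SignType.coe_one]
    exact mul_nonpos_of_nonneg_of_nonpos h.le (by linarith)

lemma sum_testDir_mul (m : ℕ) (U : ℤ → ℝ) (G : ℕ → ℝ) :
    ∑ i ∈ Finset.range (m + 1), testDir m U i * G i =
      -∑ i ∈ Finset.range m, incSign m U i * (G (i + 1) - G i) := by
  have key : ∀ j : ℕ, ∑ i ∈ Finset.range (j + 1), testDir m U i * G i =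
      incSign m U j * G j - incSign m U (-1) * G 0 -
        ∑ i ∈ Finset.range j, incSign m U i * (G (i + 1) - G i) := by
    intro j
    induction j with
    | zero => simp [testDir]; ring
    | succ j ih =>
      rw [Finset.sum_range_succ, ih, Finset.sum_range_succ _ j]
      have : ((j + 1 : ℕ) : ℤ) - 1 = j := by push_cast; ring
      rw [testDir, this]
      ring
  have h1 : incSign m U m = 0 := if_neg (by simp)
  have h2 : incSign m U (-1) = 0 := if_neg (by simp)
  rw [key m, h1, h2]
  ring

/-- A perturbation opposed to the increment raises the logarithmic density only at second order. -/
lemma log_perturb_le {d e t : ℝ} (ht : 0 ≤ t) (hde : d * e ≤ 0) :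
    Real.log (1 + (d + t * e) ^ 2) ≤ Real.log (1 + d ^ 2) + t ^ 2 * e ^ 2 := by
  have h1 : 1 + (d + t * e) ^ 2 ≤ (1 + d ^ 2) * (1 + t ^ 2 * e ^ 2) := by
    have : t * (d * e) ≤ 0 := mul_nonpos_of_nonneg_of_nonpos ht hde
    nlinarith [sq_nonneg (d * (t * e))]
  have h2 : (0 : ℝ) < 1 + t ^ 2 * e ^ 2 := by positivity
  have h3 : (0 : ℝ) < 1 + d ^ 2 := by positivity
  calc _ ≤ Real.log ((1 + d ^ 2) * (1 + t ^ 2 * e ^ 2)) := Real.log_le_log (by positivity) h1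
    _ = Real.log (1 + d ^ 2) + Real.log (1 + t ^ 2 * e ^ 2) := Real.log_mul h3.ne' h2.ne'
    _ ≤ _ := by linarith [Real.log_le_sub_one_of_pos h2]

/-! ### First variation along the test direction -/

/-- Minimality forces the fidelity term not to decrease to first order along the test direction,
since the logarithmic term grows at most quadratically along it. -/
lemma integral_testDir_nonneg {β : ℝ} (hβ : 0 < β) {f : ℝ → ℝ}
    (hf : MemLp f 2 (volume.restrict (Ioo 0 1))) {m : ℕ} {U : ℤ → ℝ}
    (hmin : IsMinimizer (m + 1) β f (stepFn (1 / ((m + 1 : ℕ) : ℝ)) U)) :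
    0 ≤ ∫ x in (0 : ℝ)..1, stepFn (1 / ((m + 1 : ℕ) : ℝ)) (testDir m U) x *
      (stepFn (1 / ((m + 1 : ℕ) : ℝ)) U x - f x) := by
  obtain ⟨-, hmin⟩ := hmin
  have hN : (0 : ℝ) < ((m + 1 : ℕ) : ℝ) := by positivity
  have hlow : lowGrid (1 / ((m + 1 : ℕ) : ℝ)) 0 = 0 := by simp [lowGrid]
  have hhigh : highGrid (1 / ((m + 1 : ℕ) : ℝ)) 1 = 1 := by
    rw [highGrid, one_div_one_div, Int.ceil_natCast, Int.cast_natCast, one_div_mul_cancel hN.ne']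
  simp only [DPMF, hlow, hhigh] at hmin
  set δ : ℝ := 1 / ((m + 1 : ℕ) : ℝ) with hδdef
  have hδ : 0 < δ := by positivity
  have hδ1 : δ ≤ 1 := by
    rw [hδdef, div_le_one hN]; push_cast; linarith [Nat.cast_nonneg (α := ℝ) m]
  have hmδ : m * δ = 1 - δ := by
    have : ((m + 1 : ℕ) : ℝ) * δ = 1 := mul_one_div_cancel hN.ne'
    push_cast at this; linarith
  set W := testDir m U with hW
  have hg : MemLp (fun x => stepFn δ U x - f x) 2 (volume.restrict (Ioo 0 1)) :=
    (memLp_stepFn hδ U 0 1).sub hf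
  have hw := memLp_stepFn hδ W 0 1
  have toII : ∀ {h : ℝ → ℝ}, Integrable h (volume.restrict (Ioo 0 1)) →
      IntervalIntegrable h volume 0 1 := fun h =>
    (intervalIntegrable_iff_integrableOn_Ioo_of_le zero_le_one).2 h
  have i1 := toII hg.integrable_sq
  have i2 : IntervalIntegrable (fun x => stepFn δ W x * (stepFn δ U x - f x)) volume 0 1 :=
    toII (hw.integrable_mul hg)
  have i3 := toII hw.integrable_sq
  set I := ∫ x in (0 : ℝ)..1, stepFn δ W x * (stepFn δ U x - f x) with hI
  set C1 := ∫ x in (0 : ℝ)..(1 - δ), Dd δ (stepFn δ W) x ^ 2 with hC1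
  set C2 := ∫ x in (0 : ℝ)..1, stepFn δ W x ^ 2 with hC2
  have main : ∀ t : ℝ, 0 < t → 0 ≤ t * (C1 + β * C2) + 2 * β * I := by
    intro t ht
    have h := hmin (stepFn δ (fun k => U k + t * W k)) (isPC_stepFn hδ _)
    have hfid : ∫ x in (0 : ℝ)..1, (stepFn δ (fun k => U k + t * W k) x - f x) ^ 2 =
        (∫ x in (0 : ℝ)..1, (stepFn δ U x - f x) ^ 2) + 2 * t * I + t ^ 2 * C2 := by
      rw [hI, hC2, ← intervalIntegral.integral_const_mul, ← intervalIntegral.integral_const_mul,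
        ← intervalIntegral.integral_add i1 (i2.const_mul _),
        ← intervalIntegral.integral_add (i1.add (i2.const_mul _)) (i3.const_mul _)]
      refine intervalIntegral.integral_congr fun x _ => ?_
      simp only [stepFn]
      ring
    have hlog : ∫ x in (0 : ℝ)..(1 - δ),
          Real.log (1 + Dd δ (stepFn δ (fun k => U k + t * W k)) x ^ 2) ≤
        (∫ x in (0 : ℝ)..(1 - δ), Real.log (1 + Dd δ (stepFn δ U) x ^ 2)) + t ^ 2 * C1 := by
      have h01 : (0 : ℝ) ≤ 1 - δ := by linarith
      have j : ∀ V : ℤ → ℝ, IntervalIntegrable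
          (fun x => Real.log (1 + Dd δ (stepFn δ V) x ^ 2)) volume 0 (1 - δ) := by
        intro V
        simp only [Dd_stepFn hδ]
        exact intervalIntegrable_stepFn hδ
          (fun k => Real.log (1 + ((V (k + 1) - V k) / δ) ^ 2)) h01
      have j' : IntervalIntegrable (fun x => Dd δ (stepFn δ W) x ^ 2) volume 0 (1 - δ) := by
        simp only [Dd_stepFn hδ]
        exact intervalIntegrable_stepFn hδ (fun k => ((W (k + 1) - W k) / δ) ^ 2) h01
      rw [hC1, ← intervalIntegral.integral_const_mul,
        ← intervalIntegral.integral_add (j U) (j'.const_mul _)]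
      refine intervalIntegral.integral_mono_on_of_le_Ioo h01 (j _) ((j U).add (j'.const_mul _)) ?_
      intro x hx
      simp only [Dd_stepFn hδ]
      have h0 : 0 ≤ ⌊x / δ⌋ := Int.floor_nonneg.2 (div_nonneg hx.1.le hδ.le)
      have hk : ⌊x / δ⌋ < m := by
        rw [Int.floor_lt, div_lt_iff₀ hδ]
        push_cast
        rw [hmδ]; exact hx.2
      have hde := inc_mul_testDir_nonpos U h0 hk
      rw [← hW] at hde
      generalize ⌊x / δ⌋ = k at *
      have e1 : (U (k + 1) + t * W (k + 1) - (U k + t * W k)) / δ =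
          (U (k + 1) - U k) / δ + t * ((W (k + 1) - W k) / δ) := by ring
      rw [e1]
      refine log_perturb_le ht.le ?_
      rw [div_mul_div_comm]
      exact div_nonpos_of_nonpos_of_nonneg hde (by positivity)
    rw [hfid] at h
    have h5 : 0 ≤ t * (t * (C1 + β * C2) + 2 * β * I) := by nlinarith
    exact nonneg_of_mul_nonneg_right h5 ht
  -- Letting `t → 0⁺` in `main`.
  have hlim : Tendsto (fun t : ℝ => t * (C1 + β * C2) + 2 * β * I) (nhdsWithin 0 (Ioi 0))
      (nhds (0 * (C1 + β * C2) + 2 * β * I)) :=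
    (Continuous.tendsto (by fun_prop) 0).mono_left nhdsWithin_le_nhds
  have h6 := ge_of_tendsto hlim (eventually_mem_nhdsWithin.mono fun t ht => main t ht)
  rw [zero_mul, zero_add] at h6
  exact nonneg_of_mul_nonneg_right h6 (by positivity)

/-- Folding `(0, 1)` onto its first cell turns the pairing with the test direction into a sum by
parts on each translate of the grid, which is controlled by the two variations. -/
lemma integral_testDir_le {f : ℝ → ℝ} (hf : eVariationOn f (Ioo 0 1) ≠ ⊤) {m : ℕ} (U : ℤ → ℝ) :
    ∫ x in (0 : ℝ)..1, stepFn (1 / ((m + 1 : ℕ) : ℝ)) (testDir m U) x *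
        (stepFn (1 / ((m + 1 : ℕ) : ℝ)) U x - f x) ≤
      1 / ((m + 1 : ℕ) : ℝ) * ((eVariationOn f (Ioo 0 1)).toReal -
        ∑ i ∈ Finset.range m, |U (i + 1) - U i|) := by
  have hN : (0 : ℝ) < ((m + 1 : ℕ) : ℝ) := by positivity
  set δ : ℝ := 1 / ((m + 1 : ℕ) : ℝ) with hδdef
  have hδ : 0 < δ := by positivity
  have hNδ : ((m + 1 : ℕ) : ℝ) * δ = 1 := mul_one_div_cancel hN.ne'
  have hmδ : ((m : ℝ) + 1) * δ = 1 := by exact_mod_cast hNδ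
  set h : ℝ → ℝ := fun x => stepFn δ (testDir m U) x * (stepFn δ U x - f x) with hh
  have hII : IntervalIntegrable h volume 0 1 :=
    (intervalIntegrable_iff_integrableOn_Ioo_of_le zero_le_one).2
      ((memLp_stepFn hδ _ 0 1).integrable_mul
        ((memLp_stepFn hδ U 0 1).sub (memLp_of_boundedVariation one_pos hf)))
  have hcell : ∀ k < m + 1, IntervalIntegrable h volume ((k : ℝ) * δ) ((k + 1 : ℕ) * δ) := by
    intro k hk
    have h1 : ((k + 1 : ℕ) : ℝ) ≤ ((m + 1 : ℕ) : ℝ) := by exact_mod_cast hk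
    have h2 : ((k + 1 : ℕ) : ℝ) * δ ≤ 1 := by rw [← hNδ]; gcongr
    have h3 : (k : ℝ) * δ ≤ ((k + 1 : ℕ) : ℝ) * δ := by gcongr; simp
    refine hII.mono_set ?_
    rw [uIcc_of_le h3, uIcc_of_le zero_le_one]
    exact Icc_subset_Icc (by positivity) h2
  have hcell' : ∀ k < m + 1, IntervalIntegrable (fun x => h (x + (k : ℝ) * δ)) volume 0 δ := by
    intro k hk
    have := (hcell k hk).comp_add_right ((k : ℝ) * δ)
    convert this using 1
    · ring
    · push_cast; ring
  have hfold : ∫ x in (0 : ℝ)..1, h x =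
      ∫ x in (0 : ℝ)..δ, ∑ k ∈ Finset.range (m + 1), h (x + (k : ℝ) * δ) := by
    rw [intervalIntegral.integral_finsetSum fun k hk => hcell' k (Finset.mem_range.1 hk)]
    have := intervalIntegral.sum_integral_adjacent_intervals (a := fun k : ℕ => (k : ℝ) * δ) hcell
    simp only [Nat.cast_zero, zero_mul, hNδ] at this
    rw [← this]
    refine Finset.sum_congr rfl fun k _ => ?_
    rw [intervalIntegral.integral_comp_add_right, zero_add]
    congr 1
    push_cast; ring
  rw [hfold]
  have hbound : ∀ x ∈ Ioo 0 δ, ∑ k ∈ Finset.range (m + 1), h (x + (k : ℝ) * δ) ≤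
      (eVariationOn f (Ioo 0 1)).toReal - ∑ i ∈ Finset.range m, |U (i + 1) - U i| := by
    intro x hx
    have hfl : ∀ k : ℕ, ⌊(x + (k : ℝ) * δ) / δ⌋ = k := by
      intro k
      refine floor_div_eq hδ ⟨?_, ?_⟩
      · push_cast; linarith [hx.1]
      · push_cast; linarith [hx.2]
    simp only [hh, stepFn, hfl]
    rw [sum_testDir_mul m U (fun i : ℕ => U i - f (x + (i : ℝ) * δ))]
    have h1 := weighted_increments_le hf hδ hmδ hx (incSign m U) (abs_incSign_le m U)
    have h2 : ∑ i ∈ Finset.range m, |U (i + 1) - U i| =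
        ∑ i ∈ Finset.range m, incSign m U i * (U (i + 1) - U i) :=
      Finset.sum_congr rfl fun i hi =>
        (incSign_mul_self U (by positivity) (by exact_mod_cast Finset.mem_range.1 hi)).symm
    have h3 : ∑ i ∈ Finset.range m, incSign m U i *
          ((U ((i + 1 : ℕ) : ℤ) - f (x + (i + 1 : ℕ) * δ)) - (U i - f (x + (i : ℕ) * δ))) =
        ∑ i ∈ Finset.range m, incSign m U i * (U (i + 1) - U i) -
        ∑ i ∈ Finset.range m, incSign m U i *
          (f (x + (i + 1 : ℕ) * δ) - f (x + (i : ℕ) * δ)) := by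
      rw [← Finset.sum_sub_distrib]
      refine Finset.sum_congr rfl fun i _ => ?_
      push_cast
      ring
    rw [h3, h2]
    linarith
  have hsum : IntervalIntegrable (fun x => ∑ k ∈ Finset.range (m + 1), h (x + (k : ℝ) * δ))
      volume 0 δ := by
    simpa only [Finset.sum_fn] using
      IntervalIntegrable.sum (Finset.range (m + 1)) fun k hk => hcell' k (Finset.mem_range.1 hk)
  refine (intervalIntegral.integral_mono_on_of_le_Ioo hδ.le hsum
    intervalIntegrable_const hbound).trans (le_of_eq ?_)
  rw [intervalIntegral.integral_const, smul_eq_mul, sub_zero]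

/-- For `β > 0` and `f ∈ BV((0,1))`, every minimizer of the discrete
Perona–Malik functional has total variation at most that of the forcing term `f`. -/
theorem minimizer_variation_le_forcing_variation
    (β : ℝ) (hβ : 0 < β) (f : ℝ → ℝ)
    (hf : eVariationOn f (Set.Ioo (0 : ℝ) 1) ≠ ⊤)
    (n : ℕ) (hn : 2 ≤ n) (u : ℝ → ℝ) (hu : IsMinimizer n β f u) :
    eVariationOn u (Set.Ioo (0 : ℝ) 1) ≤ eVariationOn f (Set.Ioo (0 : ℝ) 1) := by
  obtain ⟨m, rfl⟩ : ∃ m, n = m + 1 := ⟨n - 1, by omega⟩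
  have hδ : (0 : ℝ) < 1 / ((m + 1 : ℕ) : ℝ) := by positivity
  have hstep := hu.1.eq_stepFn hδ
  generalize (fun k : ℤ => u (k * (1 / ((m + 1 : ℕ) : ℝ)))) = U at hstep
  subst hstep
  have h1 := integral_testDir_nonneg hβ (memLp_of_boundedVariation one_pos hf) hu
  have h2 := nonneg_of_mul_nonneg_right (h1.trans (integral_testDir_le hf U)) hδ
  refine (eVariationOn_stepFn_le U).trans ?_
  rw [ENNReal.ofReal_le_iff_le_toReal hf]
  linarith

end PeronaMalik
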